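/- The set function h is super-additive over disjoint sets: for all subsets P₁, P₂ of {1,…,m} with P₁ ∩ P₂ = ∅, h(P₁ ∪ P₂) ≥ h(P₁) + h(P₂). -/

import Mathlib

open Finset

noncomputable section

/-- Frobenius inner product `⟨S, γ⟩ = Σ_{i,j} S_{ij} γ_{ij}`. -/
def dotS {m n : ℕ} (S γ : Fin m → Fin n → ℝ) : ℝ := ∑ i, ∑ j, S i j * γ i j

/-- Transport polytope with equality marginals. -/
def Gamma {m n : ℕ} (μ : Fin m → ℝ) (ν : Fin n → ℝ) : Set (Fin m → Fin n → ℝ) :=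
  {γ | (∀ i j, 0 ≤ γ i j) ∧ (∀ i, ∑ j, γ i j = μ i) ∧ (∀ j, ∑ i, γ i j = ν j)}

/-- Semi-relaxed transport polytope: target marginal constraint is `≤`. -/
def GammaLe {m n : ℕ} (μ : Fin m → ℝ) (ν : Fin n → ℝ) : Set (Fin m → Fin n → ℝ) :=
  {γ | (∀ i j, 0 ≤ γ i j) ∧ (∀ i, ∑ j, γ i j = μ i) ∧ (∀ j, ∑ i, γ i j ≤ ν j)}

/-- Indicator vector of a subset `P ⊆ {1,…,m}`. -/
def indVec {m : ℕ} (P : Finset (Fin m)) : Fin m → ℝ := fun i => if i ∈ P then 1 else 0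

/-- `h(P) = max_{γ ∈ Γ(1_P, (|P|/n)𝟙)} ⟨S, γ⟩`. -/
def hval {m n : ℕ} (S : Fin m → Fin n → ℝ) (P : Finset (Fin m)) : ℝ :=
  sSup (dotS S '' Gamma (indVec P) (fun _ => (P.card : ℝ) / (n : ℝ)))

/-- `f(P) = max_{γ ∈ Γ_≤(1_P, (k/n)𝟙)} ⟨S, γ⟩`. -/
def fval {m n : ℕ} (k : ℕ) (S : Fin m → Fin n → ℝ) (P : Finset (Fin m)) : ℝ :=
  sSup (dotS S '' GammaLe (indVec P) (fun _ => (k : ℝ) / (n : ℝ)))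

/-!
The sum of a coupling in `Γ(μ₁, ν₁)` and a coupling in `Γ(μ₂, ν₂)` is a coupling in
`Γ(μ₁ + μ₂, ν₁ + ν₂)`, and `⟨S, ·⟩` is additive; hence the optimal transport value is superadditive
in the pair of marginals. For disjoint `P₁`, `P₂` the marginals defining `h(P₁)` and `h(P₂)` add up
to those defining `h(P₁ ∪ P₂)`.
-/

section Transport

open scoped Pointwise

variable {m n : ℕ} {μ μ₁ μ₂ : Fin m → ℝ} {ν ν₁ ν₂ : Fin n → ℝ} {P Q : Finset (Fin m)}

/-- The optimal transport value `max_{γ ∈ Γ(μ, ν)} ⟨S, γ⟩` for the score matrix `S`, of which `h` is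
a special case. Encoded as a supremum, so it is `0` by convention when `Γ(μ, ν)` is empty. -/
def transportValue (S : Fin m → Fin n → ℝ) (μ : Fin m → ℝ) (ν : Fin n → ℝ) : ℝ :=
  sSup (dotS S '' Gamma μ ν)

theorem dotS_add (S γ δ : Fin m → Fin n → ℝ) : dotS S (γ + δ) = dotS S γ + dotS S δ := by
  simp only [dotS, Pi.add_apply, mul_add, sum_add_distrib]

theorem continuous_dotS (S : Fin m → Fin n → ℝ) : Continuous (dotS S) := by
  unfold dotS
  fun_prop

theorem Gamma_subset_Icc : Gamma μ ν ⊆ Set.Icc 0 fun i _ ↦ μ i := by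
  rintro γ ⟨nonneg, row, -⟩
  refine ⟨nonneg, fun i j ↦ ?_⟩
  calc γ i j ≤ ∑ k, γ i k := single_le_sum (fun k _ ↦ nonneg i k) (mem_univ j)
    _ = μ i := row i

theorem bddAbove_dotS_image_Gamma (S : Fin m → Fin n → ℝ) (μ : Fin m → ℝ) (ν : Fin n → ℝ) :
    BddAbove (dotS S '' Gamma μ ν) :=
  (isCompact_Icc.bddAbove_image (continuous_dotS S).continuousOn).mono
    (Set.image_mono Gamma_subset_Icc)

theorem Gamma_nonempty (hμ : 0 ≤ μ) (hν : 0 ≤ ν) (hmass : ∑ i, μ i = ∑ j, ν j) :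
    (Gamma μ ν).Nonempty := by
  -- The product coupling; when the total mass is `0`, it is `0` because `x / 0 = 0`.
  refine ⟨fun i j ↦ μ i * ν j / ∑ k, μ k, fun i j ↦ ?_, fun i ↦ ?_, fun j ↦ ?_⟩
  · exact div_nonneg (mul_nonneg (hμ i) (hν j)) (sum_nonneg fun k _ ↦ hμ k)
  · rw [← sum_div, ← mul_sum, ← hmass]
    exact mul_div_cancel_of_imp fun h ↦ congrFun ((Fintype.sum_eq_zero_iff_of_nonneg hμ).1 h) i
  · rw [← sum_div, ← sum_mul, hmass, mul_comm]
    exact mul_div_cancel_of_imp fun h ↦ congrFun ((Fintype.sum_eq_zero_iff_of_nonneg hν).1 h) j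

theorem Gamma_add_subset : Gamma μ₁ ν₁ + Gamma μ₂ ν₂ ⊆ Gamma (μ₁ + μ₂) (ν₁ + ν₂) := by
  rintro _ ⟨γ, ⟨γ_nonneg, γ_row, γ_col⟩, δ, ⟨δ_nonneg, δ_row, δ_col⟩, rfl⟩
  refine ⟨fun i j ↦ add_nonneg (γ_nonneg i j) (δ_nonneg i j), fun i ↦ ?_, fun j ↦ ?_⟩
  · simp only [Pi.add_apply, sum_add_distrib, γ_row, δ_row]
  · simp only [Pi.add_apply, sum_add_distrib, γ_col, δ_col]

theorem transportValue_add_le (S : Fin m → Fin n → ℝ)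
    (h₁ : (Gamma μ₁ ν₁).Nonempty) (h₂ : (Gamma μ₂ ν₂).Nonempty) :
    transportValue S μ₁ ν₁ + transportValue S μ₂ ν₂ ≤
      transportValue S (μ₁ + μ₂) (ν₁ + ν₂) := by
  calc transportValue S μ₁ ν₁ + transportValue S μ₂ ν₂
      = sSup (dotS S '' Gamma μ₁ ν₁ + dotS S '' Gamma μ₂ ν₂) :=
        (csSup_add (h₁.image _) (bddAbove_dotS_image_Gamma S μ₁ ν₁)
          (h₂.image _) (bddAbove_dotS_image_Gamma S μ₂ ν₂)).symm
    _ = sSup (dotS S '' (Gamma μ₁ ν₁ + Gamma μ₂ ν₂)) :=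
        congrArg sSup (Set.image_image2_distrib (dotS_add S)).symm
    _ ≤ transportValue S (μ₁ + μ₂) (ν₁ + ν₂) :=
        csSup_le_csSup (bddAbove_dotS_image_Gamma S _ _) ((h₁.add h₂).image _)
          (Set.image_mono Gamma_add_subset)

theorem hval_eq_transportValue (S : Fin m → Fin n → ℝ) (P : Finset (Fin m)) :
    hval S P = transportValue S (indVec P) fun _ ↦ #P / n :=
  rfl

theorem indVec_nonneg (P : Finset (Fin m)) : 0 ≤ indVec P := fun i ↦ by
  unfold indVec
  positivity

theorem sum_indVec (P : Finset (Fin m)) : ∑ i, indVec P i = #P := by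
  simp [indVec]

theorem indVec_union (hPQ : Disjoint P Q) : indVec (P ∪ Q) = indVec P + indVec Q := by
  ext i
  have not_both : i ∈ P → i ∉ Q := fun hP ↦ disjoint_left.1 hPQ hP
  by_cases hP : i ∈ P <;> simp_all [indVec]

theorem Gamma_indVec_nonempty (hn : 0 < n) (P : Finset (Fin m)) :
    (Gamma (indVec P) fun _ : Fin n ↦ (#P / n : ℝ)).Nonempty := by
  refine Gamma_nonempty (indVec_nonneg P) (fun _ ↦ by positivity) ?_
  rw [sum_indVec, Fin.sum_const, nsmul_eq_mul, mul_div_cancel₀ _ (by positivity)]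

theorem stmt_3_general (hn : 0 < n) (S : Fin m → Fin n → ℝ) (hPQ : Disjoint P Q) :
    hval S P + hval S Q ≤ hval S (P ∪ Q) := by
  have col_add : (fun _ : Fin n ↦ (#(P ∪ Q) / n : ℝ)) =
      (fun _ ↦ (#P / n : ℝ)) + fun _ ↦ (#Q / n : ℝ) := by
    ext
    simp only [Pi.add_apply, card_union_of_disjoint hPQ, Nat.cast_add, add_div]
  simp only [hval_eq_transportValue, indVec_union hPQ, col_add]
  exact transportValue_add_le S (Gamma_indVec_nonempty hn P) (Gamma_indVec_nonempty hn Q)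

end Transport

/-- `h` is super-additive over disjoint sets. -/
theorem stmt_3 (m n : ℕ) (hm : 0 < m) (hn : 0 < n)
    (S : Fin m → Fin n → ℝ) (hS : ∀ i j, 0 ≤ S i j)
    (P₁ P₂ : Finset (Fin m)) (hdisj : Disjoint P₁ P₂) :
    hval S P₁ + hval S P₂ ≤ hval S (P₁ ∪ P₂) :=
  stmt_3_general hn S hdisj
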